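/- Let A, ε ∈ ℝ with 0 < ε < 1 and A − ε > 1, and set N̄ = log((1−ε)²)/log((A−ε)/(A+ε)). If N̄ > 2, then N̄ > A + ε; moreover, if N̄ < 2, then N̄ < A + ε. -/

import Mathlib

/-- Comparison of the uncertain-plant threshold `N̄` with the worst-case known-plant
quantity `A + ε`: if `N̄ > 2` then `N̄ > A + ε`, and if `N̄ < 2` then `N̄ < A + ε`. -/
theorem stmt_12 (A ε : ℝ) (hε0 : 0 < ε) (hε1 : ε < 1) (hA : 1 < A - ε)
    (Nbar : ℝ) (hNbar : Nbar = Real.log ((1 - ε) ^ 2) / Real.log ((A - ε) / (A + ε))) :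
    (2 < Nbar → A + ε < Nbar) ∧ (Nbar < 2 → Nbar < A + ε) := by
  obtain ⟨p, hp⟩ : ∃ p, p = (A + ε) / 2 := ⟨_, rfl⟩
  have hs : A + ε = 2 * p := by linarith
  have hp0 : 0 < p := by linarith
  have hεp : ε / p < 1 := by rw [div_lt_one hp0]; linarith
  have hεp0 : 0 < ε / p := div_pos hε0 hp0
  have hratio : (A - ε) / (A + ε) = 1 + -(ε / p) := by
    rw [hs, show A - ε = 2 * p - 2 * ε by linarith]
    field_simp
    ring
  have hmul : 1 + p * -(ε / p) = 1 - ε := by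
    field_simp
    ring
  have hbase : 0 < 1 + -(ε / p) := by linarith
  have hlog : Real.log (1 + -(ε / p)) < 0 := Real.log_neg hbase (by linarith)
  rw [hratio, Real.log_pow, Nat.cast_ofNat] at hNbar
  rw [hs]
  -- Bernoulli's inequality compares `1 - ε` with `(1 - ε / p) ^ p`, according to the sign of `p - 1`.
  rcases lt_trichotomy p 1 with h | rfl | h
  · have hlt : Nbar < 2 * p := by
      have hB := rpow_one_add_lt_one_add_mul_self (s := -(ε / p)) (by linarith) (by linarith) hp0 h
      rw [hmul] at hB
      have hL := Real.log_lt_log (Real.rpow_pos_of_pos hbase p) hB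
      rw [Real.log_rpow hbase] at hL
      rw [hNbar, div_lt_iff_of_neg hlog]
      linarith
    exact ⟨fun _ => by linarith, fun _ => hlt⟩
  · have hN : Nbar = 2 := by
      rw [hNbar, ← hmul, one_mul, mul_div_cancel_right₀ _ hlog.ne]
    exact ⟨fun _ => by linarith, fun _ => by linarith⟩
  · have hlt : 2 * p < Nbar := by
      have hB := one_add_mul_self_lt_rpow_one_add (s := -(ε / p)) (by linarith) (by linarith) h
      rw [hmul] at hB
      have hL := Real.log_lt_log (by linarith) hB
      rw [Real.log_rpow hbase] at hL
      rw [hNbar, lt_div_iff_of_neg hlog]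
      linarith
    exact ⟨fun _ => hlt, fun _ => by linarith⟩
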